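/- Let s ≥ 1 be an integer; let L, R : {1,…,s} → ℂ with the L_j pairwise distinct, the R_k pairwise distinct, and L_j ≠ R_k for all j, k; let a₀, b₀ : {1,…,s} → ℂ with all values nonzero; let α₁, α₂, α₃ ∈ ℂ with R_k ≠ αᵢ and L_k ≠ αᵢ for all k, i. Define the s×s matrices A₀ = (a₀(k)/(L_j−R_k))_{j,k}, B₀ = (b₀(k)/(R_j−L_k))_{j,k} and M = (1/(L_j−R_k))_{j,k}. Then M, A₀ and B₀ are invertible; let c₊ = 𝟙ᵀM⁻¹ and c₋ = 𝟙ᵀ(Mᵀ)⁻¹, where 𝟙 is the all-ones column. For n = (n₁,n₂) ∈ ℤ² with N(n) = ⌊(n₁+n₂+2)/3⌋, set A(n) = A₀·diag((R_k−α₁)^{N(n)−n₁}·(R_k−α₂)^{N(n)−n₂}·(R_k−α₃)^{N(n)})_k and B(n) = B₀·diag((L_k−α₁)^{n₁−N(n)}·(L_k−α₂)^{n₂−N(n)}·(L_k−α₃)^{−N(n)})_k (integer powers). Assume that for every n ∈ ℤ² the matrices A(n)⁻¹ + B(n) and A(n) + B(n)⁻¹ are invertible and the scalar c₋·(A(n)+B(n)⁻¹)⁻¹·𝟙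 is nonzero. Then the function u : ℤ² → ℂ given by u(n) = c₊·(A(n)⁻¹+B(n))⁻¹·𝟙 for n ∈ Λ⁺ and u(n) = [c₋·(A(n)+B(n)⁻¹)⁻¹·𝟙]⁻¹ for n ∈ Λ⁻ (arbitrary elsewhere) satisfies the honeycomb field equations with constants Γ₁ = α₂−α₃, Γ₂ = α₃−α₁, Γ₃ = α₁−α₂; in particular all the required differences are nonzero. -/

import Mathlib

open Matrix

/-- The three honeycomb edge vectors in `ℤ²`. -/
def eHL : Fin 3 → ℤ × ℤ := ![(1, 0), (0, 1), (-1, -1)]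

/-- `u` satisfies the honeycomb field equations with constants `Γ`. -/
def HoneycombEqs (Γ : Fin 3 → ℂ) (u : ℤ × ℤ → ℂ) : Prop :=
  (∀ m : ℤ × ℤ, (m.1 + m.2) % 3 = 0 →
    (∀ i : Fin 3, u m - u (m + eHL i) ≠ 0) ∧
    ∑ i : Fin 3, Γ i / (u m - u (m + eHL i)) = 0) ∧
  (∀ m : ℤ × ℤ, (m.1 + m.2) % 3 = 1 →
    (∀ i : Fin 3, u m - u (m - eHL i) ≠ 0) ∧
    ∑ i : Fin 3, Γ i / (u m - u (m - eHL i)) = 0)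

/-- `N(n) = ⌊(n₁ + n₂ + 2)/3⌋`. -/
def NHL (n : ℤ × ℤ) : ℤ := (n.1 + n.2 + 2) / 3

/-!
Let `A` and `B` be the Cauchy-like matrices with entries `a k / (L j - R k)` and
`b k / (R j - L k)`. The linear system `φ + B ψ = c 𝟙`, `ψ - A φ = d 𝟙` has a unique solution for
each right-hand side exactly when `1 + B A` is invertible. Replacing `a`, `b` by `a (R - p)`,
`b / (L - p)` maps solutions with `d = 0` forward and solutions with `c = 0` backward, and the
right-hand sides change by the scalars `q = aᵀ(1 + B A)⁻¹𝟙` and `r = bᵀ(1 + A B)⁻¹𝟙`. Composing a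
forward step from one corner of an elementary square with a backward step from the opposite corner
gives, at both intermediate corners, a solution with right-hand side `(0, 1 + q r₁₂)`. Comparing
the two yields `(p₁ - p₂) r₁₂ = (r₁ - r₂) (1 + q r₁₂)`, and uniqueness yields `1 + q r₁₂ ≠ 0`.

The map `n ↦ (N - n₁, N - n₂, N)` lifts the honeycomb lattice to the layers of `ℤ³` with
coordinate sum `0` and `2`, the layer of sum `1` holding the intermediate corners. On the lift
`u = q` on `Λ⁺` and `u = -1 / r` on `Λ⁻`, and the square relations make the three terms of each
field equation telescope around the vertex.
-/

section Cauchy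

variable {K m n : Type*} [Field K]

/-- The Cauchy-like matrix with row nodes `x`, column nodes `y` and column weights `c`. -/
noncomputable def weightedCauchy (x : m → K) (y c : n → K) : Matrix m n K :=
  of fun j k => c k / (x j - y k)

theorem weightedCauchy_apply (x : m → K) (y c : n → K) (j : m) (k : n) :
    weightedCauchy x y c j k = c k / (x j - y k) := rfl

theorem weightedCauchy_one_transpose (x : m → K) (y : n → K) :
    (weightedCauchy x y 1)ᵀ = weightedCauchy y x (-1) := by
  ext j k
  simp only [transpose_apply, weightedCauchy_apply, Pi.one_apply, Pi.neg_apply]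
  rw [← neg_sub, div_neg, neg_div]

theorem weightedCauchy_mul_weight [Fintype n] [DecidableEq n] (x : m → K) (y c d : n → K) :
    weightedCauchy x y (c * d) = weightedCauchy x y c * diagonal d := by
  ext j k
  simp only [weightedCauchy_apply, mul_diagonal, Pi.mul_apply]
  ring

theorem weightedCauchy_mul_weight_mulVec [Fintype n] (x : m → K) (y c d v : n → K) :
    weightedCauchy x y (c * d) *ᵥ v = weightedCauchy x y c *ᵥ (d * v) := by
  ext j
  simp only [mulVec, dotProduct, weightedCauchy_apply, Pi.mul_apply]
  exact Finset.sum_congr rfl fun k _ => by ring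

theorem sub_smul_one_mul_weightedCauchy_mulVec [Fintype n] {x : m → K} {y : n → K}
    (hxy : ∀ j k, x j ≠ y k) (p : K) (c v : n → K) :
    (x - p • 1) * (weightedCauchy x y c *ᵥ v) =
      weightedCauchy x y (c * (y - p • 1)) *ᵥ v + (c ⬝ᵥ v) • 1 := by
  ext j
  simp only [mulVec, dotProduct, weightedCauchy_apply, Pi.mul_apply, Pi.add_apply, Pi.sub_apply,
    Pi.smul_apply, Pi.one_apply, smul_eq_mul, mul_one, Finset.mul_sum, ← Finset.sum_add_distrib]
  refine Finset.sum_congr rfl fun k _ => ?_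
  have := sub_ne_zero.2 (hxy j k)
  field_simp
  ring

/-- A kernel vector `v` makes `∑ₖ c k * v k / (z - y k)` vanish at all the `x j`; multiplied by the
nodal polynomial of `y` this is a polynomial of degree less than the number of the `x j`. -/
theorem isUnit_det_weightedCauchy [Fintype n] [DecidableEq n] {x y c : n → K}
    (hx : Function.Injective x) (hy : Function.Injective y) (hxy : ∀ j k, x j ≠ y k)
    (hc : ∀ k, c k ≠ 0) : IsUnit (weightedCauchy x y c).det := by
  rw [isUnit_iff_ne_zero]
  intro hdet
  obtain ⟨v, hv, hker⟩ := exists_mulVec_eq_zero_iff.2 hdet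
  let w := Lagrange.nodalWeight Finset.univ y
  have hw (k) : w k ≠ 0 := Lagrange.nodalWeight_ne_zero hy.injOn (Finset.mem_univ k)
  let P := Lagrange.interpolate Finset.univ y fun k => c k * v k / w k
  have hP_eval (j) : P.eval (x j) = 0 := by
    have hterm (k) : w k * (x j - y k)⁻¹ * (c k * v k / w k) = weightedCauchy x y c j k * v k := by
      have := hw k
      rw [weightedCauchy_apply]
      field_simp
    rw [Lagrange.eval_interpolate_not_at_node _ fun k _ => hxy j k, Finset.sum_congr rfl
      fun k _ => hterm k]
    exact mul_eq_zero_of_right _ (congrFun hker j)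
  have hP : P = 0 := Polynomial.eq_zero_of_degree_lt_of_eval_index_eq_zero Finset.univ hx.injOn
    (Lagrange.degree_interpolate_lt _ hy.injOn) fun j _ => hP_eval j
  refine hv (funext fun k => ?_)
  have hk := Lagrange.eval_interpolate_at_node (fun k => c k * v k / w k) hy.injOn
    (Finset.mem_univ k)
  change P.eval (y k) = _ at hk
  simpa [hP, hc k, hw k] using hk.symm

end Cauchy

section DarbouxStep

variable {K ι κ : Type*} [Field K]

/-- The elementary Darboux transformation `(a, b) ↦ (a (R - p), b / (L - p))`, written without
division so that exchanging the two families of nodes reverses its direction. -/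
structure IsDarbouxStep (L : κ → K) (R : ι → K) (p : K) (a : ι → K) (b : κ → K) (a' : ι → K)
    (b' : κ → K) : Prop where
  fst_eq : a' = a * (R - p • 1)
  snd_eq : b = b' * (L - p • 1)

theorem IsDarbouxStep.swap {L : κ → K} {R : ι → K} {p : K} {a a' : ι → K} {b b' : κ → K}
    (h : IsDarbouxStep L R p a b a' b') :
    IsDarbouxStep R L p b' a' b a :=
  ⟨h.snd_eq, h.fst_eq⟩

end DarbouxStep

section Wave

variable {K ι κ : Type*} [Field K] [Fintype ι] [Fintype κ]

/-- `(φ, ψ)` solves the dressing system of the nodes `L`, `R` and the weights `a`, `b` with constant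
right-hand side `(c, d)`. Equivalently, `φ` and `ψ` are the values at `R` and at `L` of the rational
functions `c - ∑ₖ b k ψ k / (z - L k)` and `d + ∑ₖ a k φ k / (z - R k)`. -/
structure IsWave (L : κ → K) (R a : ι → K) (b : κ → K) (c d : K) (φ : ι → K) (ψ : κ → K) :
    Prop where
  fst_eq : φ + weightedCauchy R L b *ᵥ ψ = c • 1
  snd_eq : ψ - weightedCauchy L R a *ᵥ φ = d • 1

/-- Invertibility of `1 + B A`, the condition under which the dressing system is uniquely
solvable. -/
def IsDressable [DecidableEq ι] (L : κ → K) (R a : ι → K) (b : κ → K) : Prop :=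
  IsUnit (1 + weightedCauchy R L b * weightedCauchy L R a).det

/-- The scalar `q = aᵀ (1 + B A)⁻¹ 𝟙`; the scalar `r = bᵀ (1 + A B)⁻¹ 𝟙` is `potential R L b a`. -/
noncomputable def potential [DecidableEq ι] (L : κ → K) (R a : ι → K) (b : κ → K) : K :=
  a ⬝ᵥ ((1 + weightedCauchy R L b * weightedCauchy L R a)⁻¹ *ᵥ 1)

variable {L : κ → K} {R : ι → K} {a a' : ι → K} {b b' : κ → K} {c c' d d' p : K}
  {φ φ' : ι → K} {ψ ψ' : κ → K}

theorem IsWave.swap (h : IsWave L R a b c d φ ψ) : IsWave R L b a d (-c) ψ (-φ) where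
  fst_eq := by rw [mulVec_neg, ← sub_eq_add_neg, h.snd_eq]
  snd_eq := by rw [neg_smul, ← h.fst_eq, neg_add, sub_eq_add_neg]

theorem IsWave.add (h : IsWave L R a b c d φ ψ) (h' : IsWave L R a b c' d' φ' ψ') :
    IsWave L R a b (c + c') (d + d') (φ + φ') (ψ + ψ') where
  fst_eq := by rw [mulVec_add, add_smul, ← h.fst_eq, ← h'.fst_eq]; abel
  snd_eq := by rw [mulVec_add, add_smul, ← h.snd_eq, ← h'.snd_eq]; abel

theorem IsWave.smul (t : K) (h : IsWave L R a b c d φ ψ) :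
    IsWave L R a b (t * c) (t * d) (t • φ) (t • ψ) where
  fst_eq := by rw [mulVec_smul, mul_smul, ← h.fst_eq, smul_add]
  snd_eq := by rw [mulVec_smul, mul_smul, ← h.snd_eq, smul_sub]

theorem IsDressable.swap [DecidableEq ι] [DecidableEq κ] (h : IsDressable L R a b) :
    IsDressable R L b a := by
  unfold IsDressable at *
  rwa [det_one_add_mul_comm]

theorem IsDressable.exists_isWave [DecidableEq ι] (h : IsDressable L R a b) :
    ∃ φ ψ, IsWave L R a b 1 0 φ ψ := by
  obtain ⟨φ, hφ⟩ := mulVec_surjective_iff_isUnit.2 ((isUnit_iff_isUnit_det _).2 h) 1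
  refine ⟨φ, weightedCauchy L R a *ᵥ φ, ?_, by rw [sub_self, zero_smul]⟩
  rw [one_smul, ← hφ, add_mulVec, one_mulVec, mulVec_mulVec]

theorem IsDressable.exists_isWave_zero_one [DecidableEq κ] (h : IsDressable R L b a) :
    ∃ φ ψ, IsWave L R a b 0 1 φ ψ := by
  obtain ⟨ψ, φ, hw⟩ := h.exists_isWave
  exact ⟨-φ, ψ, by simpa using hw.swap.swap.swap⟩

theorem IsWave.fst_eq_smul_inv_mulVec [DecidableEq ι] (hreg : IsDressable L R a b)
    (h : IsWave L R a b c 0 φ ψ) :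
    φ = c • ((1 + weightedCauchy R L b * weightedCauchy L R a)⁻¹ *ᵥ 1) := by
  have hψ : ψ = weightedCauchy L R a *ᵥ φ := sub_eq_zero.1 (h.snd_eq.trans (zero_smul _ _))
  have hφ : (1 + weightedCauchy R L b * weightedCauchy L R a) *ᵥ φ = c • 1 := by
    rw [← h.fst_eq, hψ, mulVec_mulVec, add_mulVec, one_mulVec]
  rw [← mulVec_smul, ← hφ, mulVec_mulVec, nonsing_inv_mul _ hreg, one_mulVec]

theorem IsWave.dotProduct_fst [DecidableEq ι] (hreg : IsDressable L R a b)
    (h : IsWave L R a b c 0 φ ψ) : a ⬝ᵥ φ = c * potential L R a b := by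
  rw [h.fst_eq_smul_inv_mulVec hreg, dotProduct_smul, smul_eq_mul, potential]

theorem IsWave.dotProduct_snd [DecidableEq κ] (hreg : IsDressable R L b a)
    (h : IsWave L R a b 0 d φ ψ) : b ⬝ᵥ ψ = d * potential R L b a :=
  IsWave.dotProduct_fst hreg (neg_zero (G := K) ▸ h.swap)

theorem IsWave.fst_eq_zero [DecidableEq ι] (hreg : IsDressable L R a b)
    (h : IsWave L R a b 0 0 φ ψ) : φ = 0 := by
  rw [h.fst_eq_smul_inv_mulVec hreg, zero_smul]

theorem IsWave.snd_eq_zero [DecidableEq ι] (hreg : IsDressable L R a b)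
    (h : IsWave L R a b 0 0 φ ψ) : ψ = 0 := by
  simpa [h.fst_eq_zero hreg] using h.snd_eq

theorem IsDarbouxStep.isWave_forward (hLR : ∀ j k, L j ≠ R k)
    (hstep : IsDarbouxStep L R p a b a' b') (h : IsWave L R a b c 0 φ ψ) :
    IsWave L R a' b' c (a ⬝ᵥ φ) φ ((L - p • 1) * ψ) where
  fst_eq := by rw [← weightedCauchy_mul_weight_mulVec, ← hstep.snd_eq, h.fst_eq]
  snd_eq := by
    have hψ : ψ = weightedCauchy L R a *ᵥ φ := sub_eq_zero.1 (h.snd_eq.trans (zero_smul _ _))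
    rw [hψ, sub_smul_one_mul_weightedCauchy_mulVec hLR, hstep.fst_eq, add_sub_cancel_left]

theorem IsDarbouxStep.isWave_backward (hLR : ∀ j k, L j ≠ R k)
    (hstep : IsDarbouxStep L R p a b a' b') (h : IsWave L R a' b' 0 d φ ψ) :
    IsWave L R a b (-(b' ⬝ᵥ ψ)) d ((R - p • 1) * φ) ψ where
  fst_eq := by
    have hφ : φ = -(weightedCauchy R L b' *ᵥ ψ) :=
      eq_neg_of_add_eq_zero_left (h.fst_eq.trans (zero_smul _ _))
    rw [hφ, mul_neg, sub_smul_one_mul_weightedCauchy_mulVec fun j k => (hLR k j).symm,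
      ← hstep.snd_eq, neg_add_rev, neg_add_cancel_right, neg_smul]
  snd_eq := by rw [← weightedCauchy_mul_weight_mulVec, ← hstep.fst_eq, h.snd_eq]

end Wave

section DarbouxSquare

variable {K ι κ : Type*} [Field K] [Fintype ι] [Fintype κ] [DecidableEq ι] [DecidableEq κ]
  {L : κ → K} {R : ι → K} {p₁ p₂ : K} {a a₁ a₂ a₁₂ : ι → K} {b b₁ b₂ b₁₂ : κ → K}
  {φ φ' : ι → K} {ψ ψ' : κ → K}

theorem IsDarbouxStep.isWave_middle (hLR : ∀ j k, L j ≠ R k)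
    (h₁ : IsDarbouxStep L R p₁ a b a₁ b₁) (h₁₂ : IsDarbouxStep L R p₂ a₁ b₁ a₁₂ b₁₂)
    (hreg : IsDressable L R a b) (hreg₁₂ : IsDressable L R a₁₂ b₁₂)
    (hw : IsWave L R a b 1 0 φ ψ) (hw₁₂ : IsWave L R a₁₂ b₁₂ 0 1 φ' ψ') :
    IsWave L R a₁ b₁ 0 (1 + potential L R a b * potential R L b₁₂ a₁₂)
      (potential R L b₁₂ a₁₂ • φ + (R - p₂ • 1) * φ')
      (potential R L b₁₂ a₁₂ • ((L - p₁ • 1) * ψ) + ψ') := by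
  have hforward := h₁.isWave_forward hLR hw
  have hbackward := h₁₂.isWave_backward hLR hw₁₂
  rw [hw.dotProduct_fst hreg, one_mul] at hforward
  rw [hw₁₂.dotProduct_snd hreg₁₂.swap, one_mul] at hbackward
  convert (hforward.smul (potential R L b₁₂ a₁₂)).add hbackward using 1 <;> ring

theorem IsDarbouxStep.dotProduct_middle (hLR : ∀ j k, L j ≠ R k)
    (h₁ : IsDarbouxStep L R p₁ a b a₁ b₁) (h₁₂ : IsDarbouxStep L R p₂ a₁ b₁ a₁₂ b₁₂)
    (hreg : IsDressable L R a b) (hreg₁ : IsDressable L R a₁ b₁)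
    (hreg₁₂ : IsDressable L R a₁₂ b₁₂)
    (hw : IsWave L R a b 1 0 φ ψ) (hw₁₂ : IsWave L R a₁₂ b₁₂ 0 1 φ' ψ') :
    potential R L b₁₂ a₁₂ * (b ⬝ᵥ ψ) + b₁ ⬝ᵥ ψ' =
      (1 + potential L R a b * potential R L b₁₂ a₁₂) * potential R L b₁ a₁ := by
  have hb : b₁ ⬝ᵥ ((L - p₁ • 1) * ψ) = b ⬝ᵥ ψ := by
    rw [h₁.snd_eq]
    simp only [dotProduct, Pi.mul_apply, mul_assoc]
  rw [← (h₁.isWave_middle hLR h₁₂ hreg hreg₁₂ hw hw₁₂).dotProduct_snd hreg₁.swap,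
    dotProduct_add, dotProduct_smul, smul_eq_mul, hb]

theorem one_add_potential_mul_potential_ne_zero (hLR : ∀ j k, L j ≠ R k)
    (h₁ : IsDarbouxStep L R p₁ a b a₁ b₁) (h₂ : IsDarbouxStep L R p₂ a b a₂ b₂)
    (h₁₂ : IsDarbouxStep L R p₂ a₁ b₁ a₁₂ b₁₂) (h₂₁ : IsDarbouxStep L R p₁ a₂ b₂ a₁₂ b₁₂)
    (hreg : IsDressable L R a b) (hreg₁ : IsDressable L R a₁ b₁) (hreg₂ : IsDressable L R a₂ b₂)
    (hreg₁₂ : IsDressable L R a₁₂ b₁₂) :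
    1 + potential L R a b * potential R L b₁₂ a₁₂ ≠ 0 := by
  intro hzero
  obtain ⟨φ, ψ, hw⟩ := hreg.exists_isWave
  obtain ⟨φ₁₂, ψ₁₂, hw₁₂⟩ := hreg₁₂.swap.exists_isWave_zero_one
  have hmiddle := h₁.isWave_middle hLR h₁₂ hreg hreg₁₂ hw hw₁₂
  rw [hzero] at hmiddle
  set r := potential R L b₁₂ a₁₂
  have hφ : (R - p₂ • 1) * φ₁₂ = -(r • φ) :=
    (neg_eq_of_add_eq_zero_right (hmiddle.fst_eq_zero hreg₁)).symm
  have hψ : ψ₁₂ = (L - p₁ • 1) * (-r • ψ) := by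
    rw [mul_smul_comm, neg_smul]
    exact (neg_eq_of_add_eq_zero_right (hmiddle.snd_eq_zero hreg₁)).symm
  -- The vanishing middle wave descends to a homogeneous wave at the other middle vertex.
  have hother : IsWave L R a₂ b₂ 0 0 φ₁₂ (-r • ψ) := by
    constructor
    · rw [h₂₁.snd_eq, weightedCauchy_mul_weight_mulVec, ← hψ, hw₁₂.fst_eq]
    · rw [h₂.fst_eq, weightedCauchy_mul_weight_mulVec, hφ, ← neg_smul, mulVec_smul, ← smul_sub,
        hw.snd_eq, zero_smul, smul_zero]
  have hr_zero : r = 0 := by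
    have hψ_zero : ψ₁₂ = 0 := by rw [hψ, hother.snd_eq_zero hreg₂, mul_zero]
    have hdot := hw₁₂.dotProduct_snd hreg₁₂.swap
    rwa [hψ_zero, dotProduct_zero, one_mul, eq_comm] at hdot
  simp [hr_zero] at hzero

theorem sub_mul_potential_eq (hLR : ∀ j k, L j ≠ R k)
    (h₁ : IsDarbouxStep L R p₁ a b a₁ b₁) (h₂ : IsDarbouxStep L R p₂ a b a₂ b₂)
    (h₁₂ : IsDarbouxStep L R p₂ a₁ b₁ a₁₂ b₁₂) (h₂₁ : IsDarbouxStep L R p₁ a₂ b₂ a₁₂ b₁₂)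
    (hreg : IsDressable L R a b) (hreg₁ : IsDressable L R a₁ b₁) (hreg₂ : IsDressable L R a₂ b₂)
    (hreg₁₂ : IsDressable L R a₁₂ b₁₂) :
    (p₁ - p₂) * potential R L b₁₂ a₁₂ =
      (potential R L b₁ a₁ - potential R L b₂ a₂) *
        (1 + potential L R a b * potential R L b₁₂ a₁₂) := by
  obtain ⟨φ, ψ, hw⟩ := hreg.exists_isWave
  obtain ⟨φ₁₂, ψ₁₂, hw₁₂⟩ := hreg₁₂.swap.exists_isWave_zero_one
  have hpath₁ := h₁.dotProduct_middle hLR h₁₂ hreg hreg₁ hreg₁₂ hw hw₁₂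
  have hpath₂ := h₂.dotProduct_middle hLR h₂₁ hreg hreg₂ hreg₁₂ hw hw₁₂
  have hb : b₁ - b₂ = (p₁ - p₂) • b₁₂ := by
    rw [h₁₂.snd_eq, h₂₁.snd_eq]
    ext k
    simp only [Pi.sub_apply, Pi.mul_apply, Pi.smul_apply, Pi.one_apply, smul_eq_mul]
    ring
  have hsub : b₁ ⬝ᵥ ψ₁₂ - b₂ ⬝ᵥ ψ₁₂ = (p₁ - p₂) * potential R L b₁₂ a₁₂ := by
    rw [← sub_dotProduct, hb, smul_dotProduct, hw₁₂.dotProduct_snd hreg₁₂.swap, one_mul,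
      smul_eq_mul]
  linear_combination hpath₁ - hpath₂ - hsub

end DarbouxSquare

section Lattice

/-- `HoneycombEqs` over an arbitrary field. -/
def HoneycombEqsOver {K : Type*} [Field K] (Γ : Fin 3 → K) (u : ℤ × ℤ → K) : Prop :=
  (∀ m : ℤ × ℤ, (m.1 + m.2) % 3 = 0 →
    (∀ i : Fin 3, u m - u (m + eHL i) ≠ 0) ∧
    ∑ i : Fin 3, Γ i / (u m - u (m + eHL i)) = 0) ∧
  (∀ m : ℤ × ℤ, (m.1 + m.2) % 3 = 1 →
    (∀ i : Fin 3, u m - u (m - eHL i) ≠ 0) ∧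
    ∑ i : Fin 3, Γ i / (u m - u (m - eHL i)) = 0)

/-- The lift of `ℤ²` to the layers of `ℤ³` with coordinate sum `0`, `1`, `2`: the exponents of
`R k - α i` in the weights of `A(n)`. -/
def cubicLift (n : ℤ × ℤ) : Fin 3 → ℤ := ![NHL n - n.1, NHL n - n.2, NHL n]

theorem cubicLift_sub_eHL {n : ℤ × ℤ} (hn : (n.1 + n.2) % 3 ≠ 1) (i : Fin 3) :
    cubicLift (n - eHL i) = cubicLift n + Pi.single i 1 := by
  ext j
  fin_cases i <;> fin_cases j <;> simp [cubicLift, NHL, eHL] <;> omega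

theorem add_eHL_eq_sub_sub (m : ℤ × ℤ) (i : Fin 3) :
    m + eHL i = m - eHL (i + 1) - eHL (i + 2) := by
  ext <;> fin_cases i <;> simp [eHL, sub_eq_add_neg]

theorem sub_eHL_eq_add_add (m : ℤ × ℤ) (i : Fin 3) :
    m - eHL i = m + eHL (i + 1) + eHL (i + 2) := by
  ext <;> fin_cases i <;> simp [eHL, sub_eq_add_neg]

theorem emod_three_add_eHL (n : ℤ × ℤ) (i : Fin 3) :
    ((n + eHL i).1 + (n + eHL i).2) % 3 = (n.1 + n.2 + 1) % 3 := by
  fin_cases i <;> simp [eHL] <;> omega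

theorem emod_three_sub_eHL (n : ℤ × ℤ) (i : Fin 3) :
    ((n - eHL i).1 + (n - eHL i).2) % 3 = (n.1 + n.2 - 1) % 3 := by
  fin_cases i <;> simp [eHL] <;> omega

variable {K : Type*} [Field K]

/-- The factor `∏ᵢ xᵢ ^ Eᵢ` picked up by a weight at the site with lift `E`. -/
def siteFactor (x : Fin 3 → K) (n : ℤ × ℤ) : K :=
  ∏ i, x i ^ cubicLift n i

theorem siteFactor_ne_zero {x : Fin 3 → K} (hx : ∀ i, x i ≠ 0) (n : ℤ × ℤ) :
    siteFactor x n ≠ 0 :=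
  Finset.prod_ne_zero_iff.2 fun i _ => zpow_ne_zero _ (hx i)

theorem siteFactor_sub_eHL {x : Fin 3 → K} (hx : ∀ i, x i ≠ 0) {n : ℤ × ℤ}
    (hn : (n.1 + n.2) % 3 ≠ 1) (i : Fin 3) : siteFactor x (n - eHL i) = siteFactor x n * x i := by
  simp only [siteFactor, cubicLift_sub_eHL hn, Pi.add_apply, zpow_add₀ (hx _),
    Finset.prod_mul_distrib]
  congr 1
  rw [Finset.prod_eq_single i (fun j _ hj => by simp [hj]) (by simp)]
  simp

theorem siteFactor_eq (x : Fin 3 → K) (n : ℤ × ℤ) :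
    siteFactor x n = x 0 ^ (NHL n - n.1) * x 1 ^ (NHL n - n.2) * x 2 ^ NHL n :=
  Fin.prod_univ_three _

theorem inv_siteFactor_eq (x : Fin 3 → K) (n : ℤ × ℤ) :
    (siteFactor x n)⁻¹ = x 0 ^ (n.1 - NHL n) * x 1 ^ (n.2 - NHL n) * x 2 ^ (-NHL n) := by
  simp only [siteFactor_eq, mul_inv, ← _root_.zpow_neg, neg_sub]

theorem vec_cyclic_sub (f : Fin 3 → K) :
    ![f 1 - f 2, f 2 - f 0, f 0 - f 1] = fun i => f (i + 1) - f (i + 2) := by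
  ext i
  fin_cases i <;> rfl

theorem sum_cyclic_sub_eq_zero (f : Fin 3 → K) : ∑ i, (f (i + 1) - f (i + 2)) = 0 := by
  rw [Finset.sum_sub_distrib, sub_eq_zero]
  exact (Equiv.sum_comp (Equiv.addRight 1) f).trans (Equiv.sum_comp (Equiv.addRight 2) f).symm

end Lattice

section Vertex

variable {K : Type*} [Field K] {α r r' : Fin 3 → K} {q : K}

theorem plus_vertex_equation (hr' : ∀ i, r' i ≠ 0) (hne : ∀ i, 1 + q * r' i ≠ 0)
    (hsq : ∀ i, (α (i + 1) - α (i + 2)) * r' i = (r (i + 1) - r (i + 2)) * (1 + q * r' i)) :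
    (∀ i, q - (-r' i)⁻¹ ≠ 0) ∧ ∑ i, (α (i + 1) - α (i + 2)) / (q - (-r' i)⁻¹) = 0 := by
  have hdiff (i) : q - (-r' i)⁻¹ = (1 + q * r' i) / r' i := by
    have := hr' i
    field_simp
    ring
  have hterm (i) : (α (i + 1) - α (i + 2)) / (q - (-r' i)⁻¹) = r (i + 1) - r (i + 2) := by
    rw [hdiff, div_div_eq_mul_div, hsq, mul_div_cancel_right₀ _ (hne i)]
  refine ⟨fun i => hdiff i ▸ div_ne_zero (hne i) (hr' i), ?_⟩
  simp only [hterm, sum_cyclic_sub_eq_zero]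

theorem minus_vertex_equation (hq : q ≠ 0) (hne : ∀ i, 1 + q * r' i ≠ 0)
    (hsq : ∀ i, (α (i + 1) - α (i + 2)) * r' i = (r (i + 1) - r (i + 2)) * (1 + q * r' i)) :
    (∀ i, (-q)⁻¹ - r' i ≠ 0) ∧ ∑ i, (α (i + 1) - α (i + 2)) / ((-q)⁻¹ - r' i) = 0 := by
  have hdiff (i) : (-q)⁻¹ - r' i = -(1 + q * r' i) / q := by
    field_simp
    ring
  let f (i : Fin 3) := q ^ 2 * r i - q * α i
  have hterm (i) : (α (i + 1) - α (i + 2)) / ((-q)⁻¹ - r' i) = f (i + 1) - f (i + 2) := by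
    rw [hdiff, div_div_eq_mul_div, div_eq_iff (neg_ne_zero.2 (hne i))]
    linear_combination -q ^ 2 * hsq i
  refine ⟨fun i => hdiff i ▸ div_ne_zero (neg_ne_zero.2 (hne i)) hq, ?_⟩
  simp only [hterm, sum_cyclic_sub_eq_zero]

end Vertex

section DarbouxLattice

variable {K ι κ : Type*} [Field K] {L : κ → K} {R : ι → K} {α : Fin 3 → K}

/-- The column weights of `A(n)`. -/
def plusWeight (R : ι → K) (α : Fin 3 → K) (a₀ : ι → K) (n : ℤ × ℤ) (k : ι) : K :=
  a₀ k * siteFactor (fun i => R k - α i) n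

/-- The column weights of `B(n)`. -/
def minusWeight (L : κ → K) (α : Fin 3 → K) (b₀ : κ → K) (n : ℤ × ℤ) (k : κ) : K :=
  b₀ k * (siteFactor (fun i => L k - α i) n)⁻¹

theorem plusWeight_ne_zero {a₀ : ι → K} (ha₀ : ∀ k, a₀ k ≠ 0) (hR : ∀ k i, R k ≠ α i)
    (n : ℤ × ℤ) (k : ι) : plusWeight R α a₀ n k ≠ 0 :=
  mul_ne_zero (ha₀ k) (siteFactor_ne_zero (fun i => sub_ne_zero.2 (hR k i)) n)

theorem minusWeight_ne_zero {b₀ : κ → K} (hb₀ : ∀ k, b₀ k ≠ 0) (hL : ∀ k i, L k ≠ α i)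
    (n : ℤ × ℤ) (k : κ) : minusWeight L α b₀ n k ≠ 0 :=
  mul_ne_zero (hb₀ k) (inv_ne_zero (siteFactor_ne_zero (fun i => sub_ne_zero.2 (hL k i)) n))

theorem weightedCauchy_plusWeight [Fintype ι] [DecidableEq ι] (L : κ → K) (R : ι → K)
    (α : Fin 3 → K) (a₀ : ι → K) (n : ℤ × ℤ) :
    weightedCauchy L R (plusWeight R α a₀ n) = weightedCauchy L R a₀ * diagonal fun k =>
      (R k - α 0) ^ (NHL n - n.1) * (R k - α 1) ^ (NHL n - n.2) * (R k - α 2) ^ NHL n := by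
  rw [← weightedCauchy_mul_weight]
  exact congrArg _ (funext fun k => congrArg _ (siteFactor_eq _ n))

theorem weightedCauchy_minusWeight [Fintype κ] [DecidableEq κ] (R : ι → K) (L : κ → K)
    (α : Fin 3 → K) (b₀ : κ → K) (n : ℤ × ℤ) :
    weightedCauchy R L (minusWeight L α b₀ n) = weightedCauchy R L b₀ * diagonal fun k =>
      (L k - α 0) ^ (n.1 - NHL n) * (L k - α 1) ^ (n.2 - NHL n) * (L k - α 2) ^ (-NHL n) := by
  rw [← weightedCauchy_mul_weight]
  exact congrArg _ (funext fun k => congrArg _ (inv_siteFactor_eq _ n))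

theorem isDarbouxStep_plusWeight_minusWeight (hR : ∀ k i, R k ≠ α i) (hL : ∀ k i, L k ≠ α i)
    (a₀ : ι → K) (b₀ : κ → K) {n : ℤ × ℤ} (hn : (n.1 + n.2) % 3 ≠ 1) (i : Fin 3) :
    IsDarbouxStep L R (α i) (plusWeight R α a₀ n) (minusWeight L α b₀ n)
      (plusWeight R α a₀ (n - eHL i)) (minusWeight L α b₀ (n - eHL i)) where
  fst_eq := by
    ext k
    simp [plusWeight, siteFactor_sub_eHL (fun i => sub_ne_zero.2 (hR k i)) hn, mul_assoc]
  snd_eq := by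
    ext k
    have := sub_ne_zero.2 (hL k i)
    simp only [minusWeight, siteFactor_sub_eHL (fun i => sub_ne_zero.2 (hL k i)) hn, mul_inv,
      Pi.mul_apply, Pi.sub_apply, Pi.smul_apply, Pi.one_apply, smul_eq_mul, mul_one]
    field_simp

variable {a : ℤ × ℤ → ι → K} {b : ℤ × ℤ → κ → K}

theorem IsDarbouxStep.swap_add_eHL
    (hstep : ∀ n i, (n.1 + n.2) % 3 ≠ 1 →
      IsDarbouxStep L R (α i) (a n) (b n) (a (n - eHL i)) (b (n - eHL i)))
    {n : ℤ × ℤ} (hn : (n.1 + n.2) % 3 ≠ 0) (i : Fin 3) :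
    IsDarbouxStep R L (α i) (b n) (a n) (b (n + eHL i)) (a (n + eHL i)) := by
  have hmod := emod_three_add_eHL n i
  have h := (hstep (n + eHL i) i (by omega)).swap
  rwa [add_sub_cancel_right] at h

variable [Fintype ι] [Fintype κ] [DecidableEq ι] [DecidableEq κ]

theorem potential_square_of_mem_plus (hLR : ∀ j k, L j ≠ R k)
    (hstep : ∀ n i, (n.1 + n.2) % 3 ≠ 1 →
      IsDarbouxStep L R (α i) (a n) (b n) (a (n - eHL i)) (b (n - eHL i)))
    (hreg : ∀ n, IsDressable L R (a n) (b n)) {m : ℤ × ℤ} (hm : (m.1 + m.2) % 3 = 0)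
    (i : Fin 3) :
    1 + potential L R (a m) (b m) * potential R L (b (m + eHL i)) (a (m + eHL i)) ≠ 0 ∧
    (α (i + 1) - α (i + 2)) * potential R L (b (m + eHL i)) (a (m + eHL i)) =
      (potential R L (b (m - eHL (i + 1))) (a (m - eHL (i + 1))) -
        potential R L (b (m - eHL (i + 2))) (a (m - eHL (i + 2)))) *
      (1 + potential L R (a m) (b m) * potential R L (b (m + eHL i)) (a (m + eHL i))) := by
  have hmod₁ := emod_three_sub_eHL m (i + 1)
  have hmod₂ := emod_three_sub_eHL m (i + 2)
  have h₁ := hstep m (i + 1) (by omega)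
  have h₂ := hstep m (i + 2) (by omega)
  have h₁₂ := hstep (m - eHL (i + 1)) (i + 2) (by omega)
  have h₂₁ := hstep (m - eHL (i + 2)) (i + 1) (by omega)
  rw [← add_eHL_eq_sub_sub] at h₁₂
  rw [sub_right_comm, ← add_eHL_eq_sub_sub] at h₂₁
  exact ⟨one_add_potential_mul_potential_ne_zero hLR h₁ h₂ h₁₂ h₂₁ (hreg _) (hreg _) (hreg _)
    (hreg _), sub_mul_potential_eq hLR h₁ h₂ h₁₂ h₂₁ (hreg _) (hreg _) (hreg _) (hreg _)⟩

theorem potential_square_of_mem_minus (hLR : ∀ j k, L j ≠ R k)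
    (hstep : ∀ n i, (n.1 + n.2) % 3 ≠ 1 →
      IsDarbouxStep L R (α i) (a n) (b n) (a (n - eHL i)) (b (n - eHL i)))
    (hreg : ∀ n, IsDressable L R (a n) (b n)) {m : ℤ × ℤ} (hm : (m.1 + m.2) % 3 = 1)
    (i : Fin 3) :
    1 + potential R L (b m) (a m) * potential L R (a (m - eHL i)) (b (m - eHL i)) ≠ 0 ∧
    (α (i + 1) - α (i + 2)) * potential L R (a (m - eHL i)) (b (m - eHL i)) =
      (potential L R (a (m + eHL (i + 1))) (b (m + eHL (i + 1))) -
        potential L R (a (m + eHL (i + 2))) (b (m + eHL (i + 2)))) *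
      (1 + potential R L (b m) (a m) * potential L R (a (m - eHL i)) (b (m - eHL i))) := by
  have hRL (j k) : R j ≠ L k := (hLR k j).symm
  have hreg' (n) := (hreg n).swap
  have hmod₁ := emod_three_add_eHL m (i + 1)
  have hmod₂ := emod_three_add_eHL m (i + 2)
  have hm' : (m.1 + m.2) % 3 ≠ 0 := by omega
  have h₁ := IsDarbouxStep.swap_add_eHL hstep hm' (i + 1)
  have h₂ := IsDarbouxStep.swap_add_eHL hstep hm' (i + 2)
  have h₁₂ := IsDarbouxStep.swap_add_eHL hstep (n := m + eHL (i + 1)) (by omega) (i + 2)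
  have h₂₁ := IsDarbouxStep.swap_add_eHL hstep (n := m + eHL (i + 2)) (by omega) (i + 1)
  rw [← sub_eHL_eq_add_add] at h₁₂
  rw [add_right_comm, ← sub_eHL_eq_add_add] at h₂₁
  exact ⟨one_add_potential_mul_potential_ne_zero hRL h₁ h₂ h₁₂ h₂₁ (hreg' _) (hreg' _) (hreg' _)
    (hreg' _), sub_mul_potential_eq hRL h₁ h₂ h₁₂ h₂₁ (hreg' _) (hreg' _) (hreg' _) (hreg' _)⟩

theorem honeycombEqsOver_of_isDarbouxStep (hLR : ∀ j k, L j ≠ R k)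
    (hstep : ∀ n i, (n.1 + n.2) % 3 ≠ 1 →
      IsDarbouxStep L R (α i) (a n) (b n) (a (n - eHL i)) (b (n - eHL i)))
    (hreg : ∀ n, IsDressable L R (a n) (b n))
    (hr : ∀ n, (n.1 + n.2) % 3 = 1 → potential R L (b n) (a n) ≠ 0) {u : ℤ × ℤ → K}
    (hplus : ∀ n, (n.1 + n.2) % 3 = 0 → u n = potential L R (a n) (b n))
    (hminus : ∀ n, (n.1 + n.2) % 3 = 1 → u n = (-potential R L (b n) (a n))⁻¹) :
    HoneycombEqsOver (fun i => α (i + 1) - α (i + 2)) u := by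
  constructor <;> intro m hm
  · have hsq := potential_square_of_mem_plus hLR hstep hreg hm
    have hmod (i) : ((m + eHL i).1 + (m + eHL i).2) % 3 = 1 := by
      have := emod_three_add_eHL m i
      omega
    simp only [hplus m hm, fun i => hminus _ (hmod i)]
    exact plus_vertex_equation (r := fun i => potential R L (b (m - eHL i)) (a (m - eHL i)))
      (fun i => hr _ (hmod i)) (fun i => (hsq i).1) fun i => (hsq i).2
  · have hsq := potential_square_of_mem_minus hLR hstep hreg hm
    have hmod (i) : ((m - eHL i).1 + (m - eHL i).2) % 3 = 0 := by
      have := emod_three_sub_eHL m i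
      omega
    simp only [hminus m hm, fun i => hplus _ (hmod i)]
    exact minus_vertex_equation (r := fun i => potential L R (a (m + eHL i)) (b (m + eHL i)))
      (hr m hm) (fun i => (hsq i).1) fun i => (hsq i).2

end DarbouxLattice

section SolitonMatrices

variable {K ι : Type*} [Field K] [Fintype ι] [DecidableEq ι]

theorem isDressable_of_isUnit_det_inv_add {L R a b : ι → K}
    (hA : IsUnit (weightedCauchy L R a).det)
    (h : IsUnit ((weightedCauchy L R a)⁻¹ + weightedCauchy R L b).det) : IsDressable L R a b := by
  rw [IsDressable, ← nonsing_inv_mul _ hA, ← add_mul, det_mul]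
  exact h.mul hA

theorem sum_sum_inv_mul_inv_add_inv {M A B : Matrix ι ι K} {c : ι → K} (hM : IsUnit M.det)
    (hA : IsUnit A.det) (hc : A = M * diagonal c) :
    ∑ j, ∑ k, (M⁻¹ * (A⁻¹ + B)⁻¹) j k = c ⬝ᵥ ((1 + B * A)⁻¹ *ᵥ 1) := by
  have hfactor : A⁻¹ + B = (1 + B * A) * A⁻¹ := by
    rw [add_mul, one_mul, mul_nonsing_inv_cancel_right _ _ hA]
  have hprod : M⁻¹ * (A⁻¹ + B)⁻¹ = diagonal c * (1 + B * A)⁻¹ := by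
    rw [hfactor, Matrix.mul_inv_rev, nonsing_inv_nonsing_inv _ hA, ← Matrix.mul_assoc]
    congr 1
    rw [hc, nonsing_inv_mul_cancel_left _ _ hM]
  simp only [hprod, diagonal_mul, dotProduct, mulVec, Pi.one_apply, mul_one, Finset.mul_sum]

theorem sum_sum_inv_weightedCauchy_mul_eq_potential {L R a b : ι → K}
    (hM : IsUnit (weightedCauchy L R 1).det) (hA : IsUnit (weightedCauchy L R a).det) :
    ∑ j, ∑ k, ((weightedCauchy L R 1)⁻¹ *
      ((weightedCauchy L R a)⁻¹ + weightedCauchy R L b)⁻¹) j k = potential L R a b :=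
  sum_sum_inv_mul_inv_add_inv hM hA (by rw [← weightedCauchy_mul_weight, one_mul])

theorem sum_sum_inv_weightedCauchy_transpose_mul_eq_neg_potential {L R a b : ι → K}
    (hM : IsUnit (weightedCauchy L R 1).det) (hB : IsUnit (weightedCauchy R L b).det) :
    ∑ j, ∑ k, ((weightedCauchy L R 1)ᵀ⁻¹ *
      (weightedCauchy L R a + (weightedCauchy R L b)⁻¹)⁻¹) j k = -potential R L b a := by
  rw [add_comm, sum_sum_inv_mul_inv_add_inv (c := -b) (by rwa [det_transpose]) hB, neg_dotProduct,
    potential]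
  rw [weightedCauchy_one_transpose, ← weightedCauchy_mul_weight, neg_mul_neg, one_mul]

end SolitonMatrices

theorem stmt16_general {K ι : Type*} [Field K] [Fintype ι] [DecidableEq ι] {L R : ι → K}
    (hL : Function.Injective L) (hR : Function.Injective R) (hLR : ∀ j k, L j ≠ R k)
    {a0 b0 : ι → K} (ha0 : ∀ k, a0 k ≠ 0) (hb0 : ∀ k, b0 k ≠ 0)
    {α : Fin 3 → K} (hRα : ∀ k i, R k ≠ α i) (hLα : ∀ k i, L k ≠ α i)
    {A0 B0 M : Matrix ι ι K}
    (hA0 : ∀ j k, A0 j k = a0 k / (L j - R k))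
    (hB0 : ∀ j k, B0 j k = b0 k / (R j - L k))
    (hM : ∀ j k, M j k = 1 / (L j - R k))
    {A B : ℤ × ℤ → Matrix ι ι K}
    (hA : ∀ n : ℤ × ℤ, A n = A0 * Matrix.diagonal (fun k =>
      (R k - α 0) ^ (NHL n - n.1) * (R k - α 1) ^ (NHL n - n.2)
        * (R k - α 2) ^ (NHL n)))
    (hB : ∀ n : ℤ × ℤ, B n = B0 * Matrix.diagonal (fun k =>
      (L k - α 0) ^ (n.1 - NHL n) * (L k - α 1) ^ (n.2 - NHL n)
        * (L k - α 2) ^ (-NHL n)))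
    (hinv : ∀ n : ℤ × ℤ, IsUnit ((A n)⁻¹ + B n).det)
    (hscal : ∀ n : ℤ × ℤ, (n.1 + n.2) % 3 = 1 →
      ∑ j, ∑ k, ((Mᵀ)⁻¹ * (A n + (B n)⁻¹)⁻¹) j k ≠ 0)
    {u : ℤ × ℤ → K}
    (hup : ∀ n : ℤ × ℤ, (n.1 + n.2) % 3 = 0 →
      u n = ∑ j, ∑ k, (M⁻¹ * ((A n)⁻¹ + B n)⁻¹) j k)
    (hun : ∀ n : ℤ × ℤ, (n.1 + n.2) % 3 = 1 →
      u n = (∑ j, ∑ k, ((Mᵀ)⁻¹ * (A n + (B n)⁻¹)⁻¹) j k)⁻¹) :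
    (IsUnit M.det ∧ IsUnit A0.det ∧ IsUnit B0.det) ∧
    HoneycombEqsOver ![α 1 - α 2, α 2 - α 0, α 0 - α 1] u := by
  have hRL (j k) : R j ≠ L k := (hLR k j).symm
  obtain rfl : A0 = weightedCauchy L R a0 := ext hA0
  obtain rfl : B0 = weightedCauchy R L b0 := ext hB0
  obtain rfl : M = weightedCauchy L R 1 := ext hM
  let a := plusWeight R α a0
  let b := minusWeight L α b0
  obtain rfl : A = fun n => weightedCauchy L R (a n) := funext fun n =>
    (hA n).trans (weightedCauchy_plusWeight L R α a0 n).symm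
  obtain rfl : B = fun n => weightedCauchy R L (b n) := funext fun n =>
    (hB n).trans (weightedCauchy_minusWeight R L α b0 n).symm
  have uM : IsUnit (weightedCauchy L R 1).det :=
    isUnit_det_weightedCauchy hL hR hLR fun _ => one_ne_zero
  have uA (n) : IsUnit (weightedCauchy L R (a n)).det :=
    isUnit_det_weightedCauchy hL hR hLR (plusWeight_ne_zero ha0 hRα n)
  have uB (n) : IsUnit (weightedCauchy R L (b n)).det :=
    isUnit_det_weightedCauchy hR hL hRL (minusWeight_ne_zero hb0 hLα n)
  simp only [sum_sum_inv_weightedCauchy_mul_eq_potential uM (uA _),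
    sum_sum_inv_weightedCauchy_transpose_mul_eq_neg_potential uM (uB _), neg_ne_zero]
    at hscal hup hun
  refine ⟨⟨uM, isUnit_det_weightedCauchy hL hR hLR ha0, isUnit_det_weightedCauchy hR hL hRL hb0⟩,
    ?_⟩
  rw [vec_cyclic_sub]
  exact honeycombEqsOver_of_isDarbouxStep hLR
    (fun n i hn => isDarbouxStep_plusWeight_minusWeight hRα hLα a0 b0 hn i)
    (fun n => isDressable_of_isUnit_det_inv_add (uA n) (hinv n)) hscal hup hun

theorem stmt16 (s : ℕ) (hs : 1 ≤ s) (L R : Fin s → ℂ)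
    (hL : Function.Injective L) (hR : Function.Injective R)
    (hLR : ∀ j k, L j ≠ R k)
    (a0 b0 : Fin s → ℂ) (ha0 : ∀ k, a0 k ≠ 0) (hb0 : ∀ k, b0 k ≠ 0)
    (α : Fin 3 → ℂ) (hRα : ∀ (k : Fin s) (i : Fin 3), R k ≠ α i)
    (hLα : ∀ (k : Fin s) (i : Fin 3), L k ≠ α i)
    (A0 B0 M : Matrix (Fin s) (Fin s) ℂ)
    (hA0 : ∀ j k, A0 j k = a0 k / (L j - R k))
    (hB0 : ∀ j k, B0 j k = b0 k / (R j - L k))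
    (hM : ∀ j k, M j k = 1 / (L j - R k))
    (A B : ℤ × ℤ → Matrix (Fin s) (Fin s) ℂ)
    (hA : ∀ n : ℤ × ℤ, A n = A0 * Matrix.diagonal (fun k =>
      (R k - α 0) ^ (NHL n - n.1) * (R k - α 1) ^ (NHL n - n.2)
        * (R k - α 2) ^ (NHL n)))
    (hB : ∀ n : ℤ × ℤ, B n = B0 * Matrix.diagonal (fun k =>
      (L k - α 0) ^ (n.1 - NHL n) * (L k - α 1) ^ (n.2 - NHL n)
        * (L k - α 2) ^ (-NHL n)))
    (hinv1 : ∀ n : ℤ × ℤ, IsUnit ((A n)⁻¹ + B n).det)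
    (hinv2 : ∀ n : ℤ × ℤ, IsUnit (A n + (B n)⁻¹).det)
    (hscal : ∀ n : ℤ × ℤ,
      ∑ j : Fin s, ∑ k : Fin s, ((Mᵀ)⁻¹ * (A n + (B n)⁻¹)⁻¹) j k ≠ 0)
    (u : ℤ × ℤ → ℂ)
    (hup : ∀ n : ℤ × ℤ, (n.1 + n.2) % 3 = 0 →
      u n = ∑ j : Fin s, ∑ k : Fin s, (M⁻¹ * ((A n)⁻¹ + B n)⁻¹) j k)
    (hun : ∀ n : ℤ × ℤ, (n.1 + n.2) % 3 = 1 →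
      u n = (∑ j : Fin s, ∑ k : Fin s, ((Mᵀ)⁻¹ * (A n + (B n)⁻¹)⁻¹) j k)⁻¹) :
    (IsUnit M.det ∧ IsUnit A0.det ∧ IsUnit B0.det) ∧
    HoneycombEqs ![α 1 - α 2, α 2 - α 0, α 0 - α 1] u := by
  exact stmt16_general hL hR hLR ha0 hb0 hRα hLα hA0 hB0 hM hA hB hinv1 (fun n _ => hscal n) hup hun
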